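/- Let σ > 0, let T > 0, and let s : ℝ → ℝ be twice continuously differentiable on [0,T) with s(0) = 0, s'(0) = σ, and s''(t) = 2 s(t)³ + t s(t) for all t ∈ [0,T). Then for every t with 0 < t < T one has t < ∫₀^{s(t)} du / √(σ² + u⁴). -/

import Mathlib

open Set MeasureTheory intervalIntegral Real

/-!
Writing the equation as `s'' = (2 s² + t) s` with a nonnegative coefficient, both `s s'` and then
`s'²` are nondecreasing, so `s'` never vanishes and hence stays positive; consequently `s > 0` for
`t > 0`. Now `s'' > 2 s³` for `t > 0`, so the energy `s'² - s⁴` of the autonomous equation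
`s'' = 2 s³` strictly increases from `σ²`. Thus `s' > √(σ² + s⁴)`, and separating variables gives
the bound.
-/

section Monotonicity

variable {D : Set ℝ} {f f' : ℝ → ℝ}

theorem monotoneOn_of_forall_hasDerivWithinAt_nonneg (hD : Convex ℝ D)
    (hf : ∀ t ∈ D, HasDerivWithinAt f (f' t) D t) (hf' : ∀ t ∈ interior D, 0 ≤ f' t) :
    MonotoneOn f D :=
  monotoneOn_of_hasDerivWithinAt_nonneg hD (fun t ht ↦ (hf t ht).continuousWithinAt)
    (fun t ht ↦ (hf t (interior_subset ht)).mono interior_subset) hf'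

theorem strictMonoOn_of_forall_hasDerivWithinAt_pos (hD : Convex ℝ D)
    (hf : ∀ t ∈ D, HasDerivWithinAt f (f' t) D t) (hf' : ∀ t ∈ interior D, 0 < f' t) :
    StrictMonoOn f D :=
  strictMonoOn_of_hasDerivWithinAt_pos hD (fun t ht ↦ (hf t ht).continuousWithinAt)
    (fun t ht ↦ (hf t (interior_subset ht)).mono interior_subset) hf'

end Monotonicity

theorem pos_of_isPreconnected_of_forall_ne_zero {X : Type*} [TopologicalSpace X] {D : Set X}
    {f : X → ℝ} {a t : X} (hD : IsPreconnected D) (hf : ContinuousOn f D)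
    (hne : ∀ x ∈ D, f x ≠ 0) (ha : a ∈ D) (hfa : 0 < f a) (ht : t ∈ D) : 0 < f t := by
  by_contra! hft
  obtain ⟨z, hz, hfz⟩ := hD.intermediate_value ht ha hf ⟨hft, hfa.le⟩
  exact hne z hz hfz

theorem lt_of_mem_lowerBounds_of_mem_interior {α : Type*} [TopologicalSpace α] [LinearOrder α]
    [OrderTopology α] [DenselyOrdered α] [NoMinOrder α] {D : Set α} {a t : α}
    (ha : a ∈ lowerBounds D) (ht : t ∈ interior D) : a < t := by
  have : t ∈ interior (Ici a) := interior_mono ha ht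
  rwa [interior_Ici] at this

section LinearEquation

variable {D : Set ℝ} {s s' w : ℝ → ℝ} {a t : ℝ}

theorem monotoneOn_mul_deriv_of_deriv_deriv_eq_mul (hD : Convex ℝ D)
    (hs : ∀ t ∈ D, HasDerivWithinAt s (s' t) D t)
    (hs' : ∀ t ∈ D, HasDerivWithinAt s' (w t * s t) D t) (hw : ∀ t ∈ D, 0 ≤ w t) :
    MonotoneOn (fun t ↦ s t * s' t) D := by
  refine monotoneOn_of_forall_hasDerivWithinAt_nonneg (f' := fun t ↦ s' t ^ 2 + w t * s t ^ 2) hD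
    (fun t ht ↦ ((hs t ht).mul (hs' t ht)).congr_deriv (by ring)) fun t ht ↦ ?_
  have := hw t (interior_subset ht)
  positivity

theorem monotoneOn_deriv_sq_of_deriv_deriv_eq_mul (hD : Convex ℝ D)
    (hs' : ∀ t ∈ D, HasDerivWithinAt s' (w t * s t) D t) (hw : ∀ t ∈ D, 0 ≤ w t)
    (hss' : ∀ t ∈ D, 0 ≤ s t * s' t) : MonotoneOn (fun t ↦ s' t ^ 2) D :=
  monotoneOn_of_forall_hasDerivWithinAt_nonneg (f' := fun t ↦ 2 * (w t * (s t * s' t))) hD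
    (fun t ht ↦ ((hs' t ht).fun_pow 2).congr_deriv (by push_cast; ring)) fun t ht ↦
    mul_nonneg zero_le_two (mul_nonneg (hw t (interior_subset ht)) (hss' t (interior_subset ht)))

theorem deriv_pos_of_deriv_deriv_eq_mul (hD : Convex ℝ D) (ha : IsLeast D a)
    (hs : ∀ t ∈ D, HasDerivWithinAt s (s' t) D t)
    (hs' : ∀ t ∈ D, HasDerivWithinAt s' (w t * s t) D t) (hw : ∀ t ∈ D, 0 ≤ w t)
    (hsa : 0 ≤ s a) (hs'a : 0 < s' a) (ht : t ∈ D) : 0 < s' t := by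
  have mul_deriv_nonneg : ∀ t ∈ D, 0 ≤ s t * s' t := fun t ht ↦
    (mul_nonneg hsa hs'a.le).trans
      (monotoneOn_mul_deriv_of_deriv_deriv_eq_mul hD hs hs' hw ha.1 ht (ha.2 ht))
  have deriv_sq_pos : ∀ t ∈ D, 0 < s' t ^ 2 := fun t ht ↦
    (pow_pos hs'a 2).trans_le
      (monotoneOn_deriv_sq_of_deriv_deriv_eq_mul hD hs' hw mul_deriv_nonneg ha.1 ht (ha.2 ht))
  exact pos_of_isPreconnected_of_forall_ne_zero hD.isPreconnected
    (fun t ht ↦ (hs' t ht).continuousWithinAt) (fun t ht ↦ sq_pos_iff.mp (deriv_sq_pos t ht))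
    ha.1 hs'a ht

end LinearEquation

section Comparison

variable {D : Set ℝ} {s s' : ℝ → ℝ}

theorem strictMonoOn_energy_of_lt_deriv_deriv {s'' F f : ℝ → ℝ} (hD : Convex ℝ D)
    (hs : ∀ t ∈ D, HasDerivWithinAt s (s' t) D t)
    (hs' : ∀ t ∈ D, HasDerivWithinAt s' (s'' t) D t)
    (hF : ∀ t ∈ D, HasDerivAt F (f (s t)) (s t)) (hs'_pos : ∀ t ∈ interior D, 0 < s' t)
    (hlt : ∀ t ∈ interior D, f (s t) < s'' t) :
    StrictMonoOn (fun t ↦ s' t ^ 2 / 2 - F (s t)) D := by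
  refine strictMonoOn_of_forall_hasDerivWithinAt_pos
    (f' := fun t ↦ s' t * (s'' t - f (s t))) hD (fun t ht ↦ ?_)
    fun t ht ↦ mul_pos (hs'_pos t ht) (sub_pos.mpr (hlt t ht))
  exact ((((hs' t ht).fun_pow 2).div_const 2).sub
    ((hF t ht).comp_hasDerivWithinAt t (hs t ht))).congr_deriv (by push_cast; ring)

theorem sub_lt_integral_one_div_of_lt_deriv {φ : ℝ → ℝ} {t₁ t₂ : ℝ} (hD : Convex ℝ D)
    (hs : ∀ t ∈ D, HasDerivWithinAt s (s' t) D t) (hφ : Continuous φ) (hφ_pos : ∀ u, 0 < φ u)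
    (hlt : ∀ t ∈ interior D, φ (s t) < s' t) (ht₁ : t₁ ∈ D) (ht₂ : t₂ ∈ D) (h : t₁ < t₂) :
    t₂ - t₁ < ∫ u in s t₁..s t₂, 1 / φ u := by
  have one_div_continuous : Continuous fun u ↦ 1 / φ u :=
    continuous_const.div hφ fun u ↦ (hφ_pos u).ne'
  have strictMonoOn_integral_sub : StrictMonoOn (fun t ↦ (∫ u in s t₁..s t, 1 / φ u) - t) D := by
    refine strictMonoOn_of_forall_hasDerivWithinAt_pos
      (f' := fun t ↦ 1 / φ (s t) * s' t - 1) hD (fun t ht ↦ ?_) fun t ht ↦ ?_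
    · exact ((one_div_continuous.integral_hasStrictDerivAt _ (s t)).hasDerivAt
        |>.comp_hasDerivWithinAt t (hs t ht)).sub (hasDerivWithinAt_id t D)
    · rw [sub_pos, one_div_mul_eq_div, one_lt_div (hφ_pos _)]
      exact hlt t ht
  have := strictMonoOn_integral_sub ht₁ ht₂ h
  simp only [integral_same] at this
  linarith

end Comparison

/-- `s` solves the homogeneous second Painlevé equation `s'' = 2 s³ + t s` on `D` with derivative
`s'`. Derivatives are taken within `D`, so they are one-sided at endpoints belonging to `D`. -/
structure IsPainleveIISolutionOn (s s' : ℝ → ℝ) (D : Set ℝ) : Prop where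
  hasDerivWithinAt : ∀ t ∈ D, HasDerivWithinAt s (s' t) D t
  hasDerivWithinAt_deriv : ∀ t ∈ D, HasDerivWithinAt s' (2 * s t ^ 3 + t * s t) D t

namespace IsPainleveIISolutionOn

variable {D : Set ℝ} {s s' : ℝ → ℝ} {a t : ℝ}

theorem deriv_pos (hs : IsPainleveIISolutionOn s s' D) (hD : Convex ℝ D) (ha : IsLeast D a)
    (ha_nonneg : 0 ≤ a) (hsa : 0 ≤ s a) (hs'a : 0 < s' a) (ht : t ∈ D) : 0 < s' t := by
  refine deriv_pos_of_deriv_deriv_eq_mul (w := fun t ↦ 2 * s t ^ 2 + t) hD ha hs.hasDerivWithinAt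
    (fun t ht ↦ (hs.hasDerivWithinAt_deriv t ht).congr_deriv (by ring)) (fun t ht ↦ ?_) hsa hs'a ht
  have : 0 ≤ t := ha_nonneg.trans (ha.2 ht)
  positivity

theorem strictMonoOn (hs : IsPainleveIISolutionOn s s' D) (hD : Convex ℝ D) (ha : IsLeast D a)
    (ha_nonneg : 0 ≤ a) (hsa : 0 ≤ s a) (hs'a : 0 < s' a) : StrictMonoOn s D :=
  strictMonoOn_of_forall_hasDerivWithinAt_pos hD hs.hasDerivWithinAt fun _ ht ↦
    hs.deriv_pos hD ha ha_nonneg hsa hs'a (interior_subset ht)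

theorem strictMonoOn_deriv_sq_sub_pow_four (hs : IsPainleveIISolutionOn s s' D)
    (hD : Convex ℝ D) (ha : IsLeast D a) (ha_nonneg : 0 ≤ a) (hsa : 0 ≤ s a) (hs'a : 0 < s' a) :
    StrictMonoOn (fun t ↦ s' t ^ 2 - s t ^ 4) D := by
  have hasDerivAt_potential (x : ℝ) : HasDerivAt (fun x ↦ x ^ 4 / 2) (2 * x ^ 3) x :=
    ((hasDerivAt_pow 4 x).div_const 2).congr_deriv (by push_cast; ring)
  have lt_deriv_deriv : ∀ t ∈ interior D, 2 * s t ^ 3 < 2 * s t ^ 3 + t * s t := fun t ht ↦ by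
    have hat : a < t := lt_of_mem_lowerBounds_of_mem_interior ha.2 ht
    have hst : 0 < s t :=
      hsa.trans_lt (hs.strictMonoOn hD ha ha_nonneg hsa hs'a ha.1 (interior_subset ht) hat)
    exact lt_add_of_pos_right _ (mul_pos (ha_nonneg.trans_lt hat) hst)
  have energy_strictMonoOn := strictMonoOn_energy_of_lt_deriv_deriv (f := fun x ↦ 2 * x ^ 3) hD
    hs.hasDerivWithinAt hs.hasDerivWithinAt_deriv (fun t _ ↦ hasDerivAt_potential (s t))
    (fun t ht ↦ hs.deriv_pos hD ha ha_nonneg hsa hs'a (interior_subset ht)) lt_deriv_deriv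
  intro t₁ ht₁ t₂ ht₂ h
  have := energy_strictMonoOn ht₁ ht₂ h
  dsimp only at this ⊢
  linarith

theorem sqrt_lt_deriv (hs : IsPainleveIISolutionOn s s' D) (hD : Convex ℝ D) (ha : IsLeast D a)
    (ha_nonneg : 0 ≤ a) (hsa : s a = 0) (hs'a : 0 < s' a) (ht : t ∈ D) (hat : a < t) :
    √(s' a ^ 2 + s t ^ 4) < s' t := by
  rw [sqrt_lt' (hs.deriv_pos hD ha ha_nonneg hsa.ge hs'a ht)]
  have := hs.strictMonoOn_deriv_sq_sub_pow_four hD ha ha_nonneg hsa.ge hs'a ha.1 ht hat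
  simp only [hsa] at this
  linarith

end IsPainleveIISolutionOn

theorem painleveII_time_lt_integral (σ T : ℝ) (hσ : 0 < σ) (hT : 0 < T) (s s' s'' : ℝ → ℝ)
    (hderiv1 : ∀ t ∈ Ico (0:ℝ) T, HasDerivWithinAt s (s' t) (Ico 0 T) t)
    (hderiv2 : ∀ t ∈ Ico (0:ℝ) T, HasDerivWithinAt s' (s'' t) (Ico 0 T) t)
    (hcont : ContinuousOn s'' (Ico 0 T))
    (hs0 : s 0 = 0) (hs'0 : s' 0 = σ)
    (heq : ∀ t ∈ Ico (0:ℝ) T, s'' t = 2 * s t ^ 3 + t * s t) :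
    ∀ t, 0 < t → t < T →
      t < ∫ u in (0:ℝ)..(s t), 1 / Real.sqrt (σ ^ 2 + u ^ 4) := by
  intro t ht htT
  have hs : IsPainleveIISolutionOn s s' (Ico 0 T) :=
    ⟨hderiv1, fun t ht ↦ heq t ht ▸ hderiv2 t ht⟩
  have hD : Convex ℝ (Ico 0 T) := convex_Ico 0 T
  have h0 : IsLeast (Ico 0 T) 0 := isLeast_Ico hT
  have sqrt_lt_deriv : ∀ t ∈ interior (Ico 0 T), √(σ ^ 2 + s t ^ 4) < s' t := fun t ht ↦
    hs'0 ▸ hs.sqrt_lt_deriv hD h0 le_rfl hs0 (hs'0 ▸ hσ) (interior_subset ht)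
      (lt_of_mem_lowerBounds_of_mem_interior h0.2 ht)
  have sub_lt_integral := sub_lt_integral_one_div_of_lt_deriv (φ := fun u ↦ √(σ ^ 2 + u ^ 4)) hD
    hs.hasDerivWithinAt (by fun_prop) (fun u ↦ by positivity) sqrt_lt_deriv h0.1 ⟨ht.le, htT⟩ ht
  rwa [sub_zero, hs0] at sub_lt_integral
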